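/- arXiv:2207.02598 — 2 statements merged into one kernel-verified Lean document; each statement's English description precedes it below -/
import Mathlib

section
/- Let γ be the standard Gaussian measure on ℝⁿ and let v, w ∈ ℝⁿ be nonzero with ρ := ⟨v,w⟩/(‖v‖‖w‖) satisfying |ρ| < 1. Let μ be the pushforward of γ under the map z ↦ (⟨v,z⟩, ⟨w,z⟩), a probability measure on ℝ². Then the marginals of μ are the real Gaussian measures with mean 0 and variances ‖v‖² and ‖w‖² respectively, and the Kullback–Leibler divergence of μ from the product of these two marginals equals −(1/2)·ln(1 − ρ²) = −(1/2)·ln(1 − cos²(v,w)). -/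
/-!
Regress the second coordinate on the first. With `a = ‖v‖²`, `b = ‖w‖²` and `k = ⟨v,w⟩ / a`, the
residual `w - k v` is orthogonal to `v`, so the pair has the law of `(X, k X + R)` with `X ~ N(0, a)`
and `R ~ N(0, d)` independent, where `d = ‖w - k v‖² = b (1 - ρ²)` (`stdGaussian_map_pair`).
Conditionally on `X = x` the second coordinate is `N(k x, d)`, so the joint law has density
`condDensity`, the ratio of the densities of `N(k x, d)` and `N(0, b)`, with respect to the product
of the marginals (`prod_map_shear`). The logarithm of that ratio is
`-(1/2) log (d / b) + y² / (2 b) - (y - k x)² / (2 d)` (`log_condDensity`). Under the joint law the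
last two terms have means `1/2` and `-1/2`, because `y` and `y - k x` are centred Gaussians of
variances `b` and `d`, and what remains is `-(1/2) log (d / b) = -(1/2) log (1 - ρ²)`.
-/

open MeasureTheory ProbabilityTheory

open Classical in
/-- Kullback–Leibler divergence of `μ` from `ν`. -/
noncomputable def klDiv {α : Type*} [MeasurableSpace α] (μ ν : Measure α) : EReal :=
  if μ ≪ ν ∧ Integrable (llr μ ν) μ then ((∫ a, llr μ ν a ∂μ : ℝ) : EReal) else ⊤

/-- Standard Gaussian measure on `ℝⁿ`: product of real Gaussians with mean 0, variance 1. -/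
noncomputable def stdGaussian (n : ℕ) : Measure (Fin n → ℝ) :=
  Measure.pi fun _ => gaussianReal 0 1

open scoped NNReal ENNReal

/-- The law of `⟨u, z⟩` under the standard Gaussian is centred Gaussian of variance `‖u‖²`:
its characteristic function factors over the coordinates. -/
lemma stdGaussian_map_sum (n : ℕ) (u : Fin n → ℝ) (s : ℝ≥0) (hs : (s : ℝ) = ∑ i, u i ^ 2) :
    (_root_.stdGaussian n).map (fun z => ∑ i, u i * z i) = gaussianReal 0 s := by
  have : IsProbabilityMeasure (_root_.stdGaussian n) := by
    unfold _root_.stdGaussian; infer_instance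
  have hm : Measurable (fun z : Fin n → ℝ => ∑ i, u i * z i) := by fun_prop
  have := Measure.isProbabilityMeasure_map (μ := _root_.stdGaussian n) hm.aemeasurable
  refine Measure.ext_of_charFun (funext fun t => ?_)
  rw [charFun_gaussianReal, charFun_apply_real, integral_map hm.aemeasurable (by fun_prop)]
  have hprod : ∀ z : Fin n → ℝ, Complex.exp (t * ((∑ i, u i * z i : ℝ) : ℂ) * Complex.I)
      = ∏ i, Complex.exp ((t * u i : ℝ) * (z i : ℂ) * Complex.I) := by
    intro z
    rw [← Complex.exp_sum]
    congr 1
    push_cast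
    rw [Finset.mul_sum, Finset.sum_mul]
    exact Finset.sum_congr rfl fun i _ => by ring
  simp_rw [hprod]
  rw [_root_.stdGaussian, integral_fintype_prod_eq_prod (𝕜 := ℂ)
    (f := fun i (x : ℝ) => Complex.exp ((t * u i : ℝ) * (x : ℂ) * Complex.I))]
  have hone : ∀ i, ∫ x, Complex.exp ((t * u i : ℝ) * (x : ℂ) * Complex.I) ∂(gaussianReal 0 1)
      = Complex.exp (-((u i : ℂ) ^ 2 * t ^ 2 / 2)) := by
    intro i
    rw [← charFun_apply_real, charFun_gaussianReal]
    congr 1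
    push_cast
    ring
  simp_rw [hone]
  rw [← Complex.exp_sum]
  congr 1
  have hs' : ((s : ℝ) : ℂ) = ∑ i, (u i : ℂ) ^ 2 := by rw [hs]; push_cast; rfl
  rw [hs', Finset.sum_neg_distrib, ← Finset.sum_div, ← Finset.sum_mul]
  push_cast
  ring

/-- If the residual `w - k v` is orthogonal to `v`, then `(⟨v,z⟩, ⟨w,z⟩)` has the law of
`(X, k X + R)` with `X`, `R` independent centred Gaussians of variances `‖v‖²`, `‖w - k v‖²`.
Both laws on `ℝ × ℝ` are compared through their one-dimensional projections. -/
lemma stdGaussian_map_pair (n : ℕ) (v w : Fin n → ℝ) (k : ℝ) (a d : ℝ≥0)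
    (ha : (a : ℝ) = ∑ i, v i ^ 2) (hd : (d : ℝ) = ∑ i, (w i - k * v i) ^ 2)
    (horth : ∑ i, v i * (w i - k * v i) = 0) :
    (_root_.stdGaussian n).map (fun z => (∑ i, v i * z i, ∑ i, w i * z i))
      = ((gaussianReal 0 a).prod (gaussianReal 0 d)).map (fun p => (p.1, k * p.1 + p.2)) := by
  have : IsProbabilityMeasure (_root_.stdGaussian n) := by
    unfold _root_.stdGaussian; infer_instance
  have hm : Measurable (fun z : Fin n → ℝ => (∑ i, v i * z i, ∑ i, w i * z i)) := by fun_prop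
  have hm' : Measurable (fun p : ℝ × ℝ => (p.1, k * p.1 + p.2)) := by fun_prop
  have := Measure.isProbabilityMeasure_map (μ := _root_.stdGaussian n) hm.aemeasurable
  have := Measure.isProbabilityMeasure_map
    (μ := (gaussianReal 0 a).prod (gaussianReal 0 d)) hm'.aemeasurable
  refine Measure.ext_of_charFunDual (funext fun L => ?_)
  rw [charFunDual_eq_charFun_map_one, charFunDual_eq_charFun_map_one,
    Measure.map_map (by fun_prop) hm, Measure.map_map (by fun_prop) hm']
  congr 1
  set s := L (1, 0) with hs
  set t := L (0, 1) with ht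
  have hL : ∀ x y, L (x, y) = s * x + t * y := by
    intro x y
    have : ((x, y) : ℝ × ℝ) = x • ((1, 0) : ℝ × ℝ) + y • ((0, 1) : ℝ × ℝ) := by simp
    rw [this, map_add, map_smul, map_smul, ← hs, ← ht]
    simp only [smul_eq_mul]
    ring
  have e1 : (L ∘ fun z : Fin n → ℝ => (∑ i, v i * z i, ∑ i, w i * z i))
      = fun z => ∑ i, (s * v i + t * w i) * z i := by
    funext z
    simp only [Function.comp_apply, hL, Finset.mul_sum, ← Finset.sum_add_distrib]
    exact Finset.sum_congr rfl fun i _ => by ring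
  have e2 : (L ∘ fun p : ℝ × ℝ => (p.1, k * p.1 + p.2))
      = (fun p : ℝ × ℝ => (s + t * k) * p.1) + fun p => t * p.2 := by
    funext p
    simp only [Function.comp_apply, hL, Pi.add_apply]
    ring
  -- The second projection is a sum of two independent centred Gaussians; orthogonality of the
  -- residual makes its variance agree with that of the first one.
  rw [e1, e2]
  rw [gaussianReal_add_gaussianReal_of_indepFun (m₁ := 0) (m₂ := 0)
    (v₁ := .mk ((s + t * k) ^ 2) (sq_nonneg _) * a) (v₂ := .mk (t ^ 2) (sq_nonneg _) * d)
    (indepFun_prod (X := fun x => (s + t * k) * x) (Y := fun y => t * y)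
      (by fun_prop) (by fun_prop))]
  · rw [add_zero]
    apply stdGaussian_map_sum
    push_cast
    rw [ha, hd]
    have : ∀ i, (s * v i + t * w i) ^ 2 = (s + t * k) ^ 2 * v i ^ 2
        + t ^ 2 * (w i - k * v i) ^ 2 + 2 * (s + t * k) * t * (v i * (w i - k * v i)) := by
      intro i; ring
    simp_rw [this, Finset.sum_add_distrib, ← Finset.mul_sum, horth]
    simp
  · have : (fun p : ℝ × ℝ => (s + t * k) * p.1) = (fun x => (s + t * k) * x) ∘ Prod.fst := rfl
    rw [this, ← Measure.map_map (by fun_prop) measurable_fst, Measure.map_fst_prod]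
    simp [gaussianReal_map_const_mul]
  · have : (fun p : ℝ × ℝ => t * p.2) = (fun x => t * x) ∘ Prod.snd := rfl
    rw [this, ← Measure.map_map (by fun_prop) measurable_snd, Measure.map_snd_prod]
    simp [gaussianReal_map_const_mul]

/-- The ratio at `p.2` of the densities of `N(k p.1, d)` and `N(0, b)`. When `d` is the residual
variance, this is the density of the joint law of `(X, k X + R)` with respect to the law of `X`
times `N(0, b)`. Meaningful for `b ≠ 0` and `d ≠ 0`. -/
noncomputable def condDensity (k : ℝ) (b d : ℝ≥0) (p : ℝ × ℝ) : ℝ :=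
  gaussianPDFReal (k * p.1) d p.2 / gaussianPDFReal 0 b p.2

lemma measurable_condDensity (k : ℝ) (b d : ℝ≥0) : Measurable (condDensity k b d) := by
  unfold condDensity gaussianPDFReal
  fun_prop

/-- Given the first coordinate `x`, the second coordinate of `(x, k x + R)` has law `N(k x, d)`;
rewriting that law against `N(0, b)` fibre by fibre gives the density of the pair. -/
lemma prod_map_shear (k : ℝ) (a b d : ℝ≥0) (hb : b ≠ 0) (hd : d ≠ 0) :
    ((gaussianReal 0 a).prod (gaussianReal 0 d)).map (fun p => (p.1, k * p.1 + p.2))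
      = ((gaussianReal 0 a).prod (gaussianReal 0 b)).withDensity
          (fun p => ENNReal.ofReal (condDensity k b d p)) := by
  have hf : Measurable fun p => ENNReal.ofReal (condDensity k b d p) :=
    (measurable_condDensity k b d).ennreal_ofReal
  refine Measure.ext_of_lintegral _ fun g hg => ?_
  rw [lintegral_map hg (by fun_prop), lintegral_withDensity_eq_lintegral_mul _ hf hg,
    lintegral_prod _ (by fun_prop), lintegral_prod _ (by fun_prop)]
  refine lintegral_congr fun x => ?_
  have hgx : Measurable fun y => g (x, y) := by fun_prop
  have hpdf : ∀ m e, Measurable (gaussianPDF m e) := measurable_gaussianPDF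
  have h1 : ∫⁻ y, g (x, k * x + y) ∂gaussianReal 0 d = ∫⁻ y, g (x, y) ∂gaussianReal (k * x) d := by
    have := gaussianReal_map_const_add (μ := 0) (v := d) (k * x)
    rw [zero_add] at this
    rw [← this, lintegral_map hgx (by fun_prop)]
  rw [h1, gaussianReal_of_var_ne_zero _ hd, gaussianReal_of_var_ne_zero _ hb,
    lintegral_withDensity_eq_lintegral_mul _ (hpdf _ _) hgx,
    lintegral_withDensity_eq_lintegral_mul _ (hpdf _ _) (by fun_prop)]
  refine lintegral_congr fun y => ?_
  have hpos := gaussianPDFReal_pos 0 b y hb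
  simp only [Pi.mul_apply, gaussianPDF, condDensity]
  rw [← mul_assoc, ← ENNReal.ofReal_mul hpos.le, mul_div_cancel₀ _ hpos.ne']

lemma log_condDensity (k : ℝ) (b d : ℝ≥0) (hb : b ≠ 0) (hd : d ≠ 0) (p : ℝ × ℝ) :
    Real.log (condDensity k b d p)
      = -(1 / 2) * Real.log (d / b) + p.2 ^ 2 / (2 * b) - (p.2 - k * p.1) ^ 2 / (2 * d) := by
  have hb' : (0 : ℝ) < b := by positivity
  have hd' : (0 : ℝ) < d := by positivity
  have hlog : ∀ (m : ℝ) (e : ℝ≥0) (y : ℝ), e ≠ 0 → Real.log (gaussianPDFReal m e y)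
      = -(1 / 2) * (Real.log (2 * Real.pi) + Real.log e) - (y - m) ^ 2 / (2 * e) := by
    intro m e y he
    have he' : (0 : ℝ) < e := by positivity
    rw [gaussianPDFReal, Real.log_mul (by positivity) (by positivity), Real.log_exp,
      Real.log_inv, Real.log_sqrt (by positivity), Real.log_mul (by positivity) (by positivity)]
    ring
  rw [condDensity, Real.log_div (gaussianPDFReal_pos _ _ _ hd).ne'
    (gaussianPDFReal_pos _ _ _ hb).ne', hlog _ _ _ hd, hlog _ _ _ hb,
    Real.log_div hd'.ne' hb'.ne']
  ring

lemma integral_sq_gaussianReal (s : ℝ≥0) : ∫ x, x ^ 2 ∂gaussianReal 0 s = s := by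
  have h := variance_fun_id_gaussianReal (μ := 0) (v := s)
  rwa [variance_of_integral_eq_zero (by fun_prop) (by simp [integral_id_gaussianReal])] at h

lemma integrable_sq_gaussianReal (s : ℝ≥0) : Integrable (fun x => x ^ 2) (gaussianReal 0 s) :=
  (memLp_id_gaussianReal' 2 (by simp)).integrable_sq

/-- Let `μ` be the law of `(⟨v,z⟩, ⟨w,z⟩)` under the standard Gaussian on `ℝⁿ`, for nonzero
`v`, `w` with correlation `ρ = ⟨v,w⟩/(‖v‖‖w‖)`, `|ρ| < 1`. Then the marginals of `μ` are
centered real Gaussians with variances `‖v‖²` and `‖w‖²`, and the KL divergence of `μ`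
from the product of these marginals equals `−(1/2)·ln(1 − ρ²)`
(`= −(1/2)·ln(1 − cos²(v,w))`). -/
theorem klDiv_gaussian_pair (n : ℕ) (v w : Fin n → ℝ) (hv : v ≠ 0) (hw : w ≠ 0)
    (ρ : ℝ)
    (hρ : ρ = (∑ i, v i * w i) /
        (Real.sqrt (∑ i, (v i) ^ 2) * Real.sqrt (∑ i, (w i) ^ 2)))
    (hρ1 : |ρ| < 1) :
    ((stdGaussian n).map (fun z => (∑ i, v i * z i, ∑ i, w i * z i))).map Prod.fst
        = gaussianReal 0 ⟨∑ i, (v i) ^ 2, by positivity⟩ ∧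
    ((stdGaussian n).map (fun z => (∑ i, v i * z i, ∑ i, w i * z i))).map Prod.snd
        = gaussianReal 0 ⟨∑ i, (w i) ^ 2, by positivity⟩ ∧
    klDiv ((stdGaussian n).map (fun z => (∑ i, v i * z i, ∑ i, w i * z i)))
        (((((stdGaussian n).map (fun z => (∑ i, v i * z i, ∑ i, w i * z i))).map Prod.fst)).prod
          ((((stdGaussian n).map (fun z => (∑ i, v i * z i, ∑ i, w i * z i))).map Prod.snd)))
      = ((-(1 / 2) * Real.log (1 - ρ ^ 2) : ℝ) : EReal) := by
  set γ := _root_.stdGaussian n with hγ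
  have : IsProbabilityMeasure γ := by
    rw [hγ]; unfold _root_.stdGaussian; infer_instance
  set X : (Fin n → ℝ) → ℝ × ℝ := fun z => (∑ i, v i * z i, ∑ i, w i * z i) with hX
  have hXm : Measurable X := by fun_prop
  set μ := γ.map X with hμ
  set a : ℝ≥0 := ⟨∑ i, (v i) ^ 2, by positivity⟩ with ha
  set b : ℝ≥0 := ⟨∑ i, (w i) ^ 2, by positivity⟩ with hb
  have hasum : (a : ℝ) = ∑ i, (v i) ^ 2 := rfl
  have hbsum : (b : ℝ) = ∑ i, (w i) ^ 2 := rfl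
  have hpos : ∀ u : Fin n → ℝ, u ≠ 0 → 0 < ∑ i, (u i) ^ 2 := by
    intro u hu
    obtain ⟨i, hi⟩ := Function.ne_iff.mp hu
    exact Finset.sum_pos' (fun _ _ => sq_nonneg _)
      ⟨i, Finset.mem_univ i, sq_pos_of_ne_zero hi⟩
  have ha0 : (0 : ℝ) < a := hpos v hv
  have hb0 : (0 : ℝ) < b := hpos w hw
  -- `k` is the regression coefficient of `⟨w,z⟩` on `⟨v,z⟩`, `d` the residual variance.
  set c := ∑ i, v i * w i with hc
  set k : ℝ := c / a with hk
  have horth : ∑ i, v i * (w i - k * v i) = 0 := by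
    have : ∀ i, v i * (w i - k * v i) = v i * w i - k * v i ^ 2 := fun i => by ring
    simp_rw [this, Finset.sum_sub_distrib, ← Finset.mul_sum, ← hc, ← hasum, hk]
    field_simp
    ring
  set d : ℝ≥0 := ⟨∑ i, (w i - k * v i) ^ 2, by positivity⟩ with hd
  have hdsum : (d : ℝ) = ∑ i, (w i - k * v i) ^ 2 := rfl
  have hρsq : ρ ^ 2 = c ^ 2 / (a * b) := by
    rw [hρ, ← hasum, ← hbsum, div_pow, mul_pow, Real.sq_sqrt ha0.le, Real.sq_sqrt hb0.le]
  have hdb : (d : ℝ) = b * (1 - ρ ^ 2) := by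
    have : ∀ i, (w i - k * v i) ^ 2 = w i ^ 2 - 2 * k * (v i * w i) + k ^ 2 * v i ^ 2 :=
      fun i => by ring
    rw [hdsum, hρsq]
    simp_rw [this, Finset.sum_add_distrib, Finset.sum_sub_distrib, ← Finset.mul_sum, ← hc,
      ← hasum, ← hbsum, hk]
    field_simp
    ring
  have hρ2 : 0 < 1 - ρ ^ 2 := by
    have := (sq_lt_one_iff_abs_lt_one ρ).mpr hρ1
    linarith
  have hd0 : (0 : ℝ) < d := by rw [hdb]; positivity
  have hbne : b ≠ 0 := by exact_mod_cast hb0.ne'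
  have hdne : d ≠ 0 := by exact_mod_cast hd0.ne'
  have hfst : μ.map Prod.fst = gaussianReal 0 a := by
    rw [hμ, Measure.map_map measurable_fst hXm]
    exact stdGaussian_map_sum n v a hasum
  have hsnd : μ.map Prod.snd = gaussianReal 0 b := by
    rw [hμ, Measure.map_map measurable_snd hXm]
    exact stdGaussian_map_sum n w b hbsum
  refine ⟨hfst, hsnd, ?_⟩
  rw [hfst, hsnd]
  set ν := (gaussianReal 0 a).prod (gaussianReal 0 b) with hν
  have hμν : μ = ν.withDensity (fun p => ENNReal.ofReal (condDensity k b d p)) := by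
    rw [hμ, hγ, hX, stdGaussian_map_pair n v w k a d hasum hdsum horth,
      prod_map_shear k a b d hbne hdne]
  have hac : μ ≪ ν := by
    rw [hμν]; exact withDensity_absolutelyContinuous _ _
  have hllr : llr μ ν =ᵐ[μ] fun p => -(1 / 2) * Real.log (d / b)
      + p.2 ^ 2 / (2 * b) - (p.2 - k * p.1) ^ 2 / (2 * d) := by
    have h := Measure.rnDeriv_withDensity ν (measurable_condDensity k b d).ennreal_ofReal
    rw [← hμν] at h
    filter_upwards [hac.ae_le h] with p hp
    rw [llr_def]
    simp only [hp]
    rw [ENNReal.toReal_ofReal, log_condDensity k b d hbne hdne]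
    exact div_nonneg (gaussianPDFReal_nonneg _ _ _) (gaussianPDFReal_nonneg _ _ _)
  have hresm : Measurable fun p : ℝ × ℝ => p.2 - k * p.1 := by fun_prop
  -- Both squares in the log-likelihood ratio are squares of linear images of `z`, so their means
  -- are the variances `b` and `d`, and the two quadratic terms cancel after integration.
  have hres : μ.map (fun p => p.2 - k * p.1) = gaussianReal 0 d := by
    rw [hμ, Measure.map_map hresm hXm, ← stdGaussian_map_sum n (fun i => w i - k * v i) d hdsum]
    congr 1
    funext z
    simp only [Function.comp_apply, hX, Finset.mul_sum, ← Finset.sum_sub_distrib]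
    exact Finset.sum_congr rfl fun i _ => by ring
  have hsq : ∀ m : Measure ℝ, AEStronglyMeasurable (fun x : ℝ => x ^ 2) m := fun m => by fun_prop
  have hi1 : Integrable (fun p : ℝ × ℝ => p.2 ^ 2) μ := by
    have := integrable_sq_gaussianReal b
    rw [← hsnd, integrable_map_measure (hsq _) measurable_snd.aemeasurable] at this
    exact this
  have hi2 : Integrable (fun p : ℝ × ℝ => (p.2 - k * p.1) ^ 2) μ := by
    have := integrable_sq_gaussianReal d
    rw [← hres, integrable_map_measure (hsq _) hresm.aemeasurable] at this
    exact this
  have hv1 : ∫ p, p.2 ^ 2 ∂μ = b := by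
    have := integral_sq_gaussianReal b
    rwa [← hsnd, integral_map measurable_snd.aemeasurable (hsq _)] at this
  have hv2 : ∫ p, (p.2 - k * p.1) ^ 2 ∂μ = d := by
    have := integral_sq_gaussianReal d
    rwa [← hres, integral_map hresm.aemeasurable (hsq _)] at this
  have hprob : IsProbabilityMeasure μ := Measure.isProbabilityMeasure_map hXm.aemeasurable
  have hi3 : Integrable (fun p : ℝ × ℝ => -(1 / 2) * Real.log (d / b) + p.2 ^ 2 / (2 * b)) μ :=
    (integrable_const _).add (hi1.div_const _)
  have hint : Integrable (llr μ ν) μ := (hi3.sub (hi2.div_const _)).congr hllr.symm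
  have hval : ∫ p, llr μ ν p ∂μ = -(1 / 2) * Real.log (1 - ρ ^ 2) := by
    rw [integral_congr_ae hllr, integral_sub hi3 (hi2.div_const _),
      integral_add (integrable_const _) (hi1.div_const _), integral_div, integral_div, hv1, hv2]
    have : (d : ℝ) / b = 1 - ρ ^ 2 := by rw [hdb]; field_simp
    rw [this]
    simp only [integral_const, probReal_univ, smul_eq_mul]
    field_simp
    ring
  rw [klDiv, if_pos ⟨hac, hint⟩, hval]
end

section
/- Let γ be the standard Gaussian measure on ℝⁿ. For nonzero v, w ∈ ℝⁿ, let MI(v,w) denote the Kullback–Leibler divergence of the pushforward of γ under z ↦ (⟨v,z⟩, ⟨w,z⟩) from the product of its two marginal laws. Then for nonzero v, w, v', w' ∈ ℝⁿ with cos²(v,w) < cos²(v',w') < 1 one has MI(v,w) < MI(v',w'); and for nonzero v, w with cos²(v,w) < 1, MI(v,w) = 0 if and only if ⟨v,w⟩ = 0. In particular, the mutual information of the linearized predictors is a strictly increasing function of the independence loss cos², vanishing exactly when the input gradients are orthogonal. -/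
open MeasureTheory ProbabilityTheory

/-- Mutual information of the pair `(⟨v,z⟩, ⟨w,z⟩)` under the standard Gaussian on `ℝⁿ`:
KL divergence of the joint law from the product of its two marginal laws. -/
noncomputable def MI (n : ℕ) (v w : Fin n → ℝ) : EReal :=
  klDiv ((stdGaussian n).map (fun z => (∑ i, v i * z i, ∑ i, w i * z i)))
    (((((stdGaussian n).map (fun z => (∑ i, v i * z i, ∑ i, w i * z i))).map Prod.fst)).prod
      ((((stdGaussian n).map (fun z => (∑ i, v i * z i, ∑ i, w i * z i))).map Prod.snd)))

/-- Squared cosine similarity `cos²(v,w) = ⟨v,w⟩² / (‖v‖²‖w‖²)` (the independence loss). -/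
noncomputable def cos2 (n : ℕ) (v w : Fin n → ℝ) : ℝ :=
  (∑ i, v i * w i) ^ 2 / ((∑ i, (v i) ^ 2) * (∑ i, (w i) ^ 2))

/-!
Put `a = ‖v‖²`, `c = ‖w‖²`, `b = ⟨v, w⟩` and `s = c - b² / a = c (1 - cos²(v, w))`. The proof computes
`MI(v, w) = -(1/2) log (1 - cos²(v, w))` when `cos² < 1` (`MI_eq_log`); both claims then follow from
the strict monotonicity of the logarithm.

Decompose `w = (b / a) v + u` with `u ⊥ v` and `‖u‖² = s > 0`. Then `X = ⟨v, z⟩ ∼ N(0, a)` and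
`R = ⟨u, z⟩ ∼ N(0, s)` are jointly Gaussian and uncorrelated, hence independent, and
`Y = ⟨w, z⟩ = (b / a) X + R`. So conditionally on `X` the law of `Y` is `N((b / a) X, s)`, and the joint
law has density `exp g` with respect to `N(0, a) ⊗ N(0, c)`, where
`g = -(1/2) log (s / c) - R² / (2 s) + Y² / (2 c)` (`map_shear_prod_gaussianReal`). The divergence is
the mean of `g` (`klDiv_withDensity_exp`), in which the two quadratic terms cancel because
`E R² = s` and `E Y² = c`.
-/

instance stdGaussian.isProbabilityMeasure (n : ℕ) : IsProbabilityMeasure (_root_.stdGaussian n) := by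
  unfold _root_.stdGaussian; infer_instance

lemma stdGaussian.memLp_eval {n : ℕ} (i : Fin n) :
    MemLp (fun z : Fin n → ℝ => z i) 2 (_root_.stdGaussian n) :=
  (memLp_id_gaussianReal' 2 (by simp)).comp_measurePreserving
    (measurePreserving_eval (fun _ : Fin n => gaussianReal 0 1) i)

lemma stdGaussian.memLp_linear {n : ℕ} (v : Fin n → ℝ) :
    MemLp (fun z : Fin n → ℝ => ∑ i, v i * z i) 2 (_root_.stdGaussian n) :=
  memLp_finsetSum _ fun i _ => (memLp_eval i).const_mul (v i)

lemma stdGaussian.iIndepFun_eval (n : ℕ) :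
    iIndepFun (fun (i : Fin n) (z : Fin n → ℝ) => z i) (_root_.stdGaussian n) :=
  iIndepFun_pi (X := fun _ => id) fun _ => aemeasurable_id

lemma stdGaussian.map_eval {n : ℕ} (i : Fin n) :
    (_root_.stdGaussian n).map (fun z => z i) = gaussianReal 0 1 :=
  (measurePreserving_eval (fun _ : Fin n => gaussianReal 0 1) i).map_eq

lemma stdGaussian.integral_linear {n : ℕ} (v : Fin n → ℝ) :
    ∫ z, ∑ i, v i * z i ∂(_root_.stdGaussian n) = 0 := by
  rw [integral_finsetSum _ fun i _ => ((memLp_eval i).integrable one_le_two).const_mul (v i)]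
  refine Finset.sum_eq_zero fun i _ => ?_
  rw [integral_const_mul]
  have h : ∫ z : Fin n → ℝ, z i ∂(_root_.stdGaussian n) = ∫ x, x ∂(gaussianReal 0 1) := by
    rw [← map_eval i, integral_map (Measurable.aemeasurable (by fun_prop)) (by fun_prop)]
  rw [h, integral_id_gaussianReal, mul_zero]

lemma stdGaussian.covariance_eval {n : ℕ} (i j : Fin n) :
    cov[fun z : Fin n → ℝ => z i, fun z => z j; _root_.stdGaussian n] = if i = j then 1 else 0 := by
  split_ifs with h
  · subst h
    rw [covariance_self (Measurable.aemeasurable (by fun_prop)),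
      ← variance_id_map (Measurable.aemeasurable (by fun_prop)), map_eval,
      variance_id_gaussianReal, NNReal.coe_one]
  · exact ((iIndepFun_eval n).indepFun h).covariance_eq_zero (memLp_eval i) (memLp_eval j)

/-- The covariance of two linear functionals of a standard Gaussian vector is the inner product
of their coefficient vectors. -/
lemma stdGaussian.covariance_linear {n : ℕ} (v w : Fin n → ℝ) :
    cov[fun z : Fin n → ℝ => ∑ i, v i * z i, fun z => ∑ i, w i * z i; _root_.stdGaussian n]
      = ∑ i, v i * w i := by
  rw [covariance_fun_sum_fun_sum (fun i => (memLp_eval i).const_mul (v i))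
    fun i => (memLp_eval i).const_mul (w i)]
  simp [covariance_const_mul_left, covariance_const_mul_right, covariance_eval, mul_comm]

lemma stdGaussian.hasGaussianLaw_linear_pair {n : ℕ} (v w : Fin n → ℝ) :
    HasGaussianLaw (fun z : Fin n → ℝ => (∑ i, v i * z i, ∑ i, w i * z i))
      (_root_.stdGaussian n) := by
  have h : HasGaussianLaw (fun z : Fin n → ℝ => fun i => z i) (_root_.stdGaussian n) := by
    refine iIndepFun.hasGaussianLaw (fun i => ⟨?_⟩) (iIndepFun_eval n)
    rw [map_eval]
    infer_instance
  have := h.map ((∑ i, v i • ContinuousLinearMap.proj (R := ℝ) (φ := fun _ : Fin n => ℝ) i).prod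
    (∑ i, w i • ContinuousLinearMap.proj (R := ℝ) (φ := fun _ : Fin n => ℝ) i))
  convert! this using 2 with z
  simp

lemma stdGaussian.map_linear {n : ℕ} (v : Fin n → ℝ) :
    (_root_.stdGaussian n).map (fun z => ∑ i, v i * z i)
      = gaussianReal 0 (∑ i, v i ^ 2).toNNReal := by
  have h : HasGaussianLaw (fun z : Fin n → ℝ => ∑ i, v i * z i) (_root_.stdGaussian n) :=
    (hasGaussianLaw_linear_pair v v).map (ContinuousLinearMap.fst ℝ ℝ ℝ)
  rw [h.map_eq_gaussianReal, integral_linear, ← covariance_self (Measurable.aemeasurable (by fun_prop)), covariance_linear]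
  simp_rw [pow_two]

lemma stdGaussian.integral_linear_sq {n : ℕ} (v : Fin n → ℝ) :
    ∫ z, (∑ i, v i * z i) ^ 2 ∂(_root_.stdGaussian n) = ∑ i, v i ^ 2 := by
  have h := variance_eq_sub (memLp_linear v)
  rw [← covariance_self (Measurable.aemeasurable (by fun_prop)), covariance_linear, integral_linear] at h
  simp only [Pi.pow_apply, ne_eq, OfNat.ofNat_ne_zero, not_false_eq_true, zero_pow, sub_zero] at h
  simp_rw [← h, pow_two]

/-- The ratio of the densities of `N(m, s)` and `N(0, c)`, written as an exponential. -/
lemma gaussianPDFReal_eq_mul_exp (m : ℝ) {s c : NNReal} (hs : s ≠ 0) (hc : c ≠ 0) (y : ℝ) :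
    gaussianPDFReal m s y = gaussianPDFReal 0 c y *
      Real.exp (-(1 / 2) * Real.log (s / c) - (y - m) ^ 2 / (2 * s) + y ^ 2 / (2 * c)) := by
  have hs' : (0 : ℝ) < s := by positivity
  have hc' : (0 : ℝ) < c := by positivity
  have h : ∀ x : ℝ, 0 < x → (√(2 * Real.pi * x))⁻¹
      = Real.exp (-(1 / 2) * Real.log (2 * Real.pi) - 1 / 2 * Real.log x) := by
    intro x hx
    rw [← Real.exp_log (show 0 < (√(2 * Real.pi * x))⁻¹ by positivity), Real.log_inv,
      Real.log_sqrt (by positivity), Real.log_mul (by positivity) hx.ne']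
    ring_nf
  simp only [gaussianPDFReal]
  rw [h s hs', h c hc', ← Real.exp_add, ← Real.exp_add, ← Real.exp_add,
    Real.log_div hs'.ne' hc'.ne']
  ring_nf

/-- The law of `(x, β x + r)` for `x ∼ μ` and an independent `r ∼ N(0, s)` has an explicit density
with respect to `μ ⊗ N(0, c)`: conditionally on `x`, the second coordinate is `N(β x, s)`. -/
lemma map_shear_prod_gaussianReal (μ : Measure ℝ) [IsProbabilityMeasure μ] (β : ℝ) {s c : NNReal}
    (hs : s ≠ 0) (hc : c ≠ 0) :
    (μ.prod (gaussianReal 0 s)).map (fun p => (p.1, β * p.1 + p.2))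
      = (μ.prod (gaussianReal 0 c)).withDensity (fun p => ENNReal.ofReal
        (Real.exp (-(1 / 2) * Real.log (s / c) - (p.2 - β * p.1) ^ 2 / (2 * s)
          + p.2 ^ 2 / (2 * c)))) := by
  ext A hA
  have hm : Measurable (A.indicator (1 : ℝ × ℝ → ENNReal)) := measurable_one.indicator hA
  rw [← lintegral_indicator_one hA, ← lintegral_indicator_one hA,
    lintegral_map hm (by fun_prop), lintegral_withDensity_eq_lintegral_mul _ (by fun_prop) hm,
    lintegral_prod _ (by fun_prop), lintegral_prod _ (by fun_prop)]
  refine lintegral_congr fun x => ?_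
  have hm' : Measurable fun y => A.indicator (1 : ℝ × ℝ → ENNReal) (x, y) := by fun_prop
  have h1 := lintegral_map (μ := gaussianReal 0 s) hm' (measurable_const_add (β * x))
  rw [gaussianReal_map_const_add, zero_add] at h1
  rw [← h1, gaussianReal_of_var_ne_zero _ hs, gaussianReal_of_var_ne_zero _ hc,
    lintegral_withDensity_eq_lintegral_mul _ (by fun_prop) (by fun_prop),
    lintegral_withDensity_eq_lintegral_mul _ (by fun_prop) (by fun_prop)]
  refine lintegral_congr fun y => ?_
  simp only [Pi.mul_apply, gaussianPDF]
  rw [gaussianPDFReal_eq_mul_exp (β * x) hs hc y, ENNReal.ofReal_mul (gaussianPDFReal_nonneg _ _ _),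
    mul_assoc]

/-- The divergence of a measure with density `exp g` is the mean of `g`. -/
lemma klDiv_withDensity_exp {α : Type*} [MeasurableSpace α] (Q : Measure α) [SigmaFinite Q]
    {g : α → ℝ} (hg : Measurable g)
    (hi : Integrable g (Q.withDensity fun a => ENNReal.ofReal (Real.exp (g a)))) :
    klDiv (Q.withDensity fun a => ENNReal.ofReal (Real.exp (g a))) Q
      = ((∫ a, g a ∂(Q.withDensity fun a => ENNReal.ofReal (Real.exp (g a))) : ℝ) : EReal) := by
  set J := Q.withDensity fun a => ENNReal.ofReal (Real.exp (g a))
  have hac : J ≪ Q := withDensity_absolutelyContinuous _ _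
  have hllr : llr J Q =ᵐ[J] g := by
    refine hac.ae_le ?_
    filter_upwards [Measure.rnDeriv_withDensity Q
      (f := fun a => ENNReal.ofReal (Real.exp (g a))) (by fun_prop)] with a ha
    rw [llr, ha, ENNReal.toReal_ofReal (Real.exp_pos _).le, Real.log_exp]
  rw [klDiv, if_pos ⟨hac, hi.congr hllr.symm⟩, integral_congr_ae hllr]

lemma sum_sq_pos {n : ℕ} {v : Fin n → ℝ} (hv : v ≠ 0) : 0 < ∑ i, v i ^ 2 := by
  obtain ⟨i, hi⟩ := Function.ne_iff.mp hv
  exact Finset.sum_pos' (fun _ _ => sq_nonneg _)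
    ⟨i, Finset.mem_univ i, by simpa [sq_pos_iff] using hi⟩

/-- Closed form of the mutual information of a nondegenerate Gaussian pair. -/
lemma MI_eq_log {n : ℕ} {v w : Fin n → ℝ} (hv : v ≠ 0) (hw : w ≠ 0) (h : cos2 n v w < 1) :
    MI n v w = ((-(1 / 2) * Real.log (1 - cos2 n v w) : ℝ) : EReal) := by
  have ha := sum_sq_pos hv
  have hc := sum_sq_pos hw
  set a := ∑ i, v i ^ 2 with ha_def
  set c := ∑ i, w i ^ 2 with hc_def
  set b := ∑ i, v i * w i with hb_def
  set P := _root_.stdGaussian n with hP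
  set β := b / a with hβ
  -- `u` is the component of `w` orthogonal to `v`
  set u : Fin n → ℝ := fun i => w i - β * v i with hu
  have hcos : cos2 n v w = b ^ 2 / (a * c) := rfl
  have huu : ∑ i, u i ^ 2 = c * (1 - cos2 n v w) := by
    have : ∑ i, u i ^ 2 = c - 2 * β * b + β ^ 2 * a := by
      simp only [hu, ha_def, hb_def, hc_def, Finset.mul_sum, ← Finset.sum_add_distrib,
        ← Finset.sum_sub_distrib]
      exact Finset.sum_congr rfl fun i _ => by ring
    rw [this, hcos, hβ]
    field_simp
    ring
  have hvu : ∑ i, v i * u i = 0 := by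
    have : ∑ i, v i * u i = b - β * a := by
      simp only [hu, ha_def, hb_def, Finset.mul_sum, ← Finset.sum_sub_distrib]
      exact Finset.sum_congr rfl fun i _ => by ring
    rw [this, hβ]
    field_simp
    ring
  have hs : 0 < ∑ i, u i ^ 2 := by rw [huu]; exact mul_pos hc (by linarith)
  set s := ∑ i, u i ^ 2 with hs_def
  have hw_eq : ∀ z : Fin n → ℝ, ∑ i, w i * z i = β * (∑ i, v i * z i) + ∑ i, u i * z i := by
    intro z
    simp only [hu, Finset.mul_sum, ← Finset.sum_add_distrib]
    exact Finset.sum_congr rfl fun i _ => by ring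
  -- uncorrelated jointly Gaussian variables are independent
  have hind : P.map (fun z => (∑ i, v i * z i, ∑ i, u i * z i))
      = (gaussianReal 0 a.toNNReal).prod (gaussianReal 0 s.toNNReal) := by
    have := (stdGaussian.hasGaussianLaw_linear_pair v u).indepFun_of_covariance_eq_zero
      (by rw [stdGaussian.covariance_linear, hvu])
    rw [indepFun_iff_map_prod_eq_prod_map_map (Measurable.aemeasurable (by fun_prop))
      (Measurable.aemeasurable (by fun_prop)),
      stdGaussian.map_linear, stdGaussian.map_linear] at this
    exact this
  set g : ℝ × ℝ → ℝ := fun p => -(1 / 2) * Real.log (s.toNNReal / c.toNNReal)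
    - (p.2 - β * p.1) ^ 2 / (2 * s.toNNReal) + p.2 ^ 2 / (2 * c.toNNReal) with hg
  have hgm : Measurable g := by fun_prop
  have hjoint : P.map (fun z => (∑ i, v i * z i, ∑ i, w i * z i))
      = ((gaussianReal 0 a.toNNReal).prod (gaussianReal 0 c.toNNReal)).withDensity
        fun p => ENNReal.ofReal (Real.exp (g p)) := by
    rw [← map_shear_prod_gaussianReal _ β (Real.toNNReal_pos.mpr hs).ne'
      (Real.toNNReal_pos.mpr hc).ne', ← hind, Measure.map_map (by fun_prop) (by fun_prop)]
    congr 1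
    ext z : 1
    simp only [Function.comp_apply, hw_eq]
  have hfst : (P.map (fun z => (∑ i, v i * z i, ∑ i, w i * z i))).map Prod.fst
      = gaussianReal 0 a.toNNReal := by
    rw [Measure.map_map (by fun_prop) (by fun_prop)]
    exact stdGaussian.map_linear v
  have hsnd : (P.map (fun z => (∑ i, v i * z i, ∑ i, w i * z i))).map Prod.snd
      = gaussianReal 0 c.toNNReal := by
    rw [Measure.map_map (by fun_prop) (by fun_prop)]
    exact stdGaussian.map_linear w
  have hgz : ∀ z : Fin n → ℝ, g (∑ i, v i * z i, ∑ i, w i * z i)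
      = -(1 / 2) * Real.log (1 - cos2 n v w) - (∑ i, u i * z i) ^ 2 / (2 * s)
        + (∑ i, w i * z i) ^ 2 / (2 * c) := by
    intro z
    have h1 : s / c = 1 - cos2 n v w := by rw [huu]; field_simp
    simp only [hg, Real.coe_toNNReal _ hs.le, Real.coe_toNNReal _ hc.le, h1]
    rw [show ∑ i, w i * z i - β * ∑ i, v i * z i = ∑ i, u i * z i by rw [hw_eq]; ring]
  have hiu : Integrable (fun z : Fin n → ℝ => (∑ i, u i * z i) ^ 2 / (2 * s)) P :=
    (stdGaussian.memLp_linear u).integrable_sq.div_const _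
  have hiw : Integrable (fun z : Fin n → ℝ => (∑ i, w i * z i) ^ 2 / (2 * c)) P :=
    (stdGaussian.memLp_linear w).integrable_sq.div_const _
  have hi1 : Integrable (fun z : Fin n → ℝ => -(1 / 2) * Real.log (1 - cos2 n v w)
      - (∑ i, u i * z i) ^ 2 / (2 * s)) P := (integrable_const _).sub hiu
  have hint : Integrable g (P.map (fun z => (∑ i, v i * z i, ∑ i, w i * z i))) := by
    rw [integrable_map_measure hgm.aestronglyMeasurable (by fun_prop)]
    simp only [Function.comp_def, hgz]
    exact hi1.add hiw
  have hmean : ∫ p, g p ∂(P.map (fun z => (∑ i, v i * z i, ∑ i, w i * z i)))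
      = -(1 / 2) * Real.log (1 - cos2 n v w) := by
    rw [integral_map (by fun_prop) hgm.aestronglyMeasurable]
    simp only [hgz]
    -- both quadratic terms have mean `1 / 2`
    rw [integral_add hi1 hiw, integral_sub (integrable_const _) hiu, integral_div, integral_div,
      stdGaussian.integral_linear_sq, stdGaussian.integral_linear_sq, integral_const]
    simp only [probReal_univ, one_smul, ← hs_def, ← hc_def]
    field_simp
    ring
  rw [MI, ← hP, hfst, hsnd]
  rw [hjoint] at hint hmean ⊢
  rw [klDiv_withDensity_exp _ hgm hint, hmean]

/-- The mutual information of the linearized predictors is a strictly increasing function of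
the independence loss `cos²`, and it vanishes exactly when the input gradients are
orthogonal. -/
theorem MI_strictMono_cos2_and_eq_zero_iff_orthogonal (n : ℕ) :
    (∀ v w v' w' : Fin n → ℝ, v ≠ 0 → w ≠ 0 → v' ≠ 0 → w' ≠ 0 →
      cos2 n v w < cos2 n v' w' → cos2 n v' w' < 1 → MI n v w < MI n v' w') ∧
    (∀ v w : Fin n → ℝ, v ≠ 0 → w ≠ 0 → cos2 n v w < 1 →
      (MI n v w = 0 ↔ ∑ i, v i * w i = 0)) := by
  refine ⟨fun v w v' w' hv hw hv' hw' hlt h1 => ?_, fun v w hv hw h1 => ?_⟩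
  · rw [MI_eq_log hv hw (hlt.trans h1), MI_eq_log hv' hw' h1, EReal.coe_lt_coe_iff]
    have := Real.log_lt_log (sub_pos.mpr h1) (sub_lt_sub_left hlt 1)
    linarith
  · have hv0 := sum_sq_pos hv
    have hw0 := sum_sq_pos hw
    have hcos : cos2 n v w = (∑ i, v i * w i) ^ 2 / ((∑ i, v i ^ 2) * ∑ i, w i ^ 2) := rfl
    have hnn : 0 ≤ cos2 n v w := by rw [hcos]; positivity
    have hzero : cos2 n v w = 0 ↔ ∑ i, v i * w i = 0 := by
      rw [hcos, div_eq_zero_iff, or_iff_left (mul_pos hv0 hw0).ne', sq_eq_zero_iff]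
    rw [MI_eq_log hv hw h1, ← hzero, EReal.coe_eq_zero]
    constructor
    · intro h
      by_contra hne
      have := Real.log_neg (sub_pos.mpr h1) (sub_lt_self 1 (lt_of_le_of_ne hnn (Ne.symm hne)))
      linarith
    · intro h
      simp [h]
end
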